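/- arXiv:1208.0411 — 4 statements merged into one kernel-verified Lean document; each statement's English description precedes it below -/
import Mathlib

section
/- Let I ≥ 1 and let F : [0,∞) × ℝ^I → ℝ^I be continuous and satisfy the Lipschitz condition ‖F(t,P) − F(t,M)‖ ≤ L‖P − M‖ for all P, M ∈ ℝ^I and all t ≥ 0, where ‖N‖ = Σ_{i=1}^I |N_i|. Assume F is quasi-positive: for every M ∈ ℝ^I with M_i ≥ 0 for all i, and every index i with M_i = 0, one has F_i(t,M) ≥ 0 for all t ≥ 0. Then every differentiable solution y : [0,∞) → ℝ^I of y'(t) = F(t, y(t)) with componentwise nonnegative initial value y(0) ≥ 0 satisfies y(t) ≥ 0 componentwise for all t ≥ 0. -/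
open Set

theorem hasDerivAt_negsq (x : ℝ) :
    HasDerivAt (fun z : ℝ => (min z 0) ^ 2) (2 * min x 0) x := by
  rw [hasDerivAt_iff_isLittleO]
  have h1 : (fun z : ℝ => (z - x) ^ 2) =o[nhds x] fun z => z - x := by
    simpa using (Asymptotics.isLittleO_pow_sub_sub x (m := 2) (by norm_num))
  refine Asymptotics.IsBigO.trans_isLittleO ?_ h1
  refine Asymptotics.IsBigO.of_bound 1 (Filter.Eventually.of_forall fun z => ?_)
  simp only [Real.norm_eq_abs, smul_eq_mul, one_mul]
  rw [abs_of_nonneg (sq_nonneg (z - x)), abs_le]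
  rcases le_total z 0 with hz | hz <;> rcases le_total x 0 with hx | hx <;>
    simp only [min_eq_left, min_eq_right, hz, hx] <;> constructor <;>
    nlinarith [sq_nonneg (z - x), sq_nonneg z, sq_nonneg x]

/-- Quasi-positivity with a Lipschitz right-hand side implies that solutions of the
semi-discrete system starting from componentwise nonnegative data stay componentwise
nonnegative for all times. -/
theorem stmt1 (I : ℕ) (hI : 1 ≤ I) (L : ℝ)
    (F : ℝ → (Fin I → ℝ) → (Fin I → ℝ))
    (hFcont : ContinuousOn (fun p : ℝ × (Fin I → ℝ) => F p.1 p.2) (Ici (0:ℝ) ×ˢ univ))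
    (hLip : ∀ t ≥ (0:ℝ), ∀ P M : Fin I → ℝ,
      ∑ i, |F t P i - F t M i| ≤ L * ∑ i, |P i - M i|)
    (hqp : ∀ t ≥ (0:ℝ), ∀ M : Fin I → ℝ, (∀ i, 0 ≤ M i) → ∀ i, M i = 0 → 0 ≤ F t M i)
    (y y' : ℝ → Fin I → ℝ)
    (hy : ∀ t ≥ (0:ℝ), ∀ i, HasDerivAt (fun s => y s i) (y' t i) t)
    (hode : ∀ t ≥ (0:ℝ), y' t = F t (y t))
    (h0 : ∀ i, 0 ≤ y 0 i) :
    ∀ t ≥ (0:ℝ), ∀ i, 0 ≤ y t i := by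
  have hphi : ∀ t ≥ (0:ℝ), HasDerivAt (fun s => ∑ i, (min (y s i) 0) ^ 2)
      (∑ i, 2 * min (y t i) 0 * y' t i) t := by
    intro t ht
    exact HasDerivAt.fun_sum fun i _ =>
      HasDerivAt.comp (h₂ := fun z : ℝ => (min z 0) ^ 2) t (hasDerivAt_negsq (y t i)) (hy t ht i)
  have hbound : ∀ t ≥ (0:ℝ), ∑ i, 2 * min (y t i) 0 * y' t i ≤
      (2 * |L| * I) * ∑ i, (min (y t i) 0) ^ 2 := by
    intro t ht
    set S := ∑ i, |min (y t i) 0| with hS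
    have hS0 : 0 ≤ S := Finset.sum_nonneg fun i _ => abs_nonneg _
    have hLS := hLip t ht (y t) (fun i => max (y t i) 0)
    have hdiff : ∀ i, y t i - max (y t i) 0 = min (y t i) 0 := fun i => by
      linarith [min_add_max (y t i) 0]
    simp only [hdiff] at hLS
    rw [← hS] at hLS
    have hLS2 : L * S ≤ |L| * S := mul_le_mul_of_nonneg_right (le_abs_self L) hS0
    have hterm : ∀ i, 2 * min (y t i) 0 * y' t i ≤ 2 * (|L| * S) * |min (y t i) 0| := by
      intro i
      rcases le_total 0 (y t i) with h | h
      · simp [min_eq_right h]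
      · have hq := hqp t ht (fun i => max (y t i) 0) (fun i => le_max_right _ _) i
          (max_eq_right h)
        have h1 := Finset.single_le_sum
          (f := fun i => |F t (y t) i - F t (fun i => max (y t i) 0) i|)
          (fun i _ => abs_nonneg _) (Finset.mem_univ i)
        have h2 := neg_abs_le (F t (y t) i - F t (fun i => max (y t i) 0) i)
        have h3 : -(|L| * S) ≤ y' t i := by
          rw [hode t ht]
          linarith
        rw [min_eq_left h, abs_of_nonpos h]
        nlinarith
    have hsq : S ^ 2 ≤ I * ∑ i, (min (y t i) 0) ^ 2 := by
      have := sq_sum_le_card_mul_sum_sq (s := Finset.univ) (f := fun i => |min (y t i) 0|)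
      simpa using this
    calc _ ≤ ∑ i, 2 * (|L| * S) * |min (y t i) 0| := Finset.sum_le_sum fun i _ => hterm i
      _ = 2 * |L| * S ^ 2 := by rw [← Finset.mul_sum, ← hS]; ring
      _ ≤ 2 * |L| * (I * ∑ i, (min (y t i) 0) ^ 2) :=
        mul_le_mul_of_nonneg_left hsq (by positivity)
      _ = _ := by ring
  set c : ℝ := 2 * |L| * I with hc
  have hg : ∀ t ≥ (0:ℝ), HasDerivAt
      (fun s => (∑ i, (min (y s i) 0) ^ 2) * Real.exp (-c * s))
      ((∑ i, 2 * min (y t i) 0 * y' t i) * Real.exp (-c * t) +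
        (∑ i, (min (y t i) 0) ^ 2) * (Real.exp (-c * t) * (-c * 1))) t := by
    intro t ht
    exact (hphi t ht).mul (((hasDerivAt_id t).const_mul (-c)).exp)
  have hanti : AntitoneOn (fun s => (∑ i, (min (y s i) 0) ^ 2) * Real.exp (-c * s))
      (Ici (0:ℝ)) := by
    refine antitoneOn_of_deriv_nonpos (convex_Ici 0)
      (fun t ht => (hg t ht).continuousAt.continuousWithinAt)
      (fun t ht => (hg t (interior_subset ht)).differentiableAt.differentiableWithinAt) ?_
    intro t ht
    have ht0 : t ≥ (0:ℝ) := interior_subset ht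
    rw [(hg t ht0).deriv]
    have := mul_le_mul_of_nonneg_right (hbound t ht0) (Real.exp_pos (-c * t)).le
    linarith
  intro t ht i
  have h1 := hanti (mem_Ici.2 le_rfl) (mem_Ici.2 ht) ht
  simp only [min_eq_right (h0 _)] at h1
  have h2 : ∑ i, (min (y t i) 0) ^ 2 ≤ 0 := by
    by_contra hcon
    have := mul_pos (not_le.1 hcon) (Real.exp_pos (-c * t))
    simp at h1
    simp at this
    linarith
  have h3 := Finset.single_le_sum (f := fun i => (min (y t i) 0) ^ 2)
    (fun i _ => sq_nonneg _) (Finset.mem_univ i)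
  have h4 : min (y t i) 0 = 0 := by
    have : (min (y t i) 0) ^ 2 = 0 := le_antisymm (h3.trans h2) (sq_nonneg _)
    exact pow_eq_zero_iff (two_ne_zero) |>.1 this
  exact min_eq_right_iff.1 h4
end

section
/- Let a grid of ]0,R] with I cells be given, and let β be symmetric with 0 ≤ β(x_j, x_k) ≤ C for all pivots x_j, x_k. Let N, M ∈ ℝ^I be componentwise nonnegative with Σ_{j=1}^I N_j ≤ N_T⁰ and Σ_{j=1}^I M_j ≤ N_T⁰. Then the discrete birth rates satisfy Σ_{i=1}^I |B̂_i(N) − B̂_i(M)| ≤ 3 N_T⁰ C · Σ_{k=1}^I |N_k − M_k|, i.e. the discrete birth term is Lipschitz with constant 3 N_T⁰ C on this set. -/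
/-- The pivot (grid point) of the `k`-th cell: the midpoint of `]xb (k-1), xb k]`.
Here `xb k` denotes the cell boundary `x_{k+1/2}`. -/
noncomputable def pivot (xb : ℕ → ℝ) (k : ℕ) : ℝ := (xb (k - 1) + xb k) / 2

/-- The pairs `(j,k)` with `1 ≤ k ≤ j ≤ I` such that `x_j + x_k` lies in the `i`-th cell
`[x_{i-1/2}, x_{i+1/2})`. -/
noncomputable def birthPairs (xb : ℕ → ℝ) (I i : ℕ) : Finset (ℕ × ℕ) :=
  (Finset.Icc 1 I ×ˢ Finset.Icc 1 I).filter
    (fun q => q.2 ≤ q.1 ∧ xb (i - 1) ≤ pivot xb q.1 + pivot xb q.2 ∧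
      pivot xb q.1 + pivot xb q.2 < xb i)

/-- The discrete birth rate
`B̂_i(N) = ∑_{x_{i-1/2} ≤ x_j + x_k < x_{i+1/2}, j ≥ k} (1 − δ_{jk}/2) β(x_k, x_j) N_j N_k`. -/
noncomputable def Bhat (xb : ℕ → ℝ) (β : ℝ → ℝ → ℝ) (I : ℕ) (N : ℕ → ℝ) (i : ℕ) : ℝ :=
  ∑ q ∈ birthPairs xb I i,
    (if q.1 = q.2 then (1 : ℝ)/2 else 1) * β (pivot xb q.2) (pivot xb q.1) * N q.1 * N q.2

/-- The discrete volume flux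
`V̂_i(N) = ∑_{x_{i-1/2} ≤ x_j + x_k < x_{i+1/2}, j ≥ k} (1 − δ_{jk}/2) β(x_k, x_j) N_j N_k (x_j + x_k)`. -/
noncomputable def Vhat (xb : ℕ → ℝ) (β : ℝ → ℝ → ℝ) (I : ℕ) (N : ℕ → ℝ) (i : ℕ) : ℝ :=
  ∑ q ∈ birthPairs xb I i,
    (if q.1 = q.2 then (1 : ℝ)/2 else 1) * β (pivot xb q.2) (pivot xb q.1) * N q.1 * N q.2 *
      (pivot xb q.1 + pivot xb q.2)

/-- The discrete death rate `D̂_i(N) = N_i ∑_{j=1}^I β(x_i, x_j) N_j`. -/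
noncomputable def Dhat (xb : ℕ → ℝ) (β : ℝ → ℝ → ℝ) (I : ℕ) (N : ℕ → ℝ) (i : ℕ) : ℝ :=
  N i * ∑ j ∈ Finset.Icc 1 I, β (pivot xb i) (pivot xb j) * N j

/-- Lipschitz estimate for the discrete birth term: on the set of componentwise nonnegative
vectors with total number of particles at most `N_T⁰`, the discrete birth rates satisfy
`∑_i |B̂_i(N) − B̂_i(M)| ≤ 3 N_T⁰ C ∑_k |N_k − M_k|`. -/
theorem stmt3 (I : ℕ) (hI : 1 ≤ I) (R : ℝ) (hR : 0 < R)
    (xb : ℕ → ℝ) (hxb0 : xb 0 = 0) (hxbI : xb I = R)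
    (hmono : ∀ k < I, xb k < xb (k + 1))
    (β : ℝ → ℝ → ℝ) (C NT0 : ℝ)
    (hβsym : ∀ x y, β x y = β y x)
    (hβ : ∀ j ∈ Finset.Icc 1 I, ∀ k ∈ Finset.Icc 1 I,
      0 ≤ β (pivot xb j) (pivot xb k) ∧ β (pivot xb j) (pivot xb k) ≤ C)
    (N M : ℕ → ℝ)
    (hN : ∀ j ∈ Finset.Icc 1 I, 0 ≤ N j) (hM : ∀ j ∈ Finset.Icc 1 I, 0 ≤ M j)
    (hNs : ∑ j ∈ Finset.Icc 1 I, N j ≤ NT0) (hMs : ∑ j ∈ Finset.Icc 1 I, M j ≤ NT0) :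
    ∑ i ∈ Finset.Icc 1 I, |Bhat xb β I N i - Bhat xb β I M i| ≤
      3 * NT0 * C * ∑ k ∈ Finset.Icc 1 I, |N k - M k| := by
  have mono : ∀ b, b ≤ I → ∀ a ≤ b, xb a ≤ xb b := by
    intro b
    induction b with
    | zero =>
      intro _ a ha
      have h0 : a = 0 := by omega
      rw [h0]
    | succ n ih =>
      intro hb a ha
      rcases Nat.lt_or_ge n a with h | h
      · have h0 : a = n + 1 := by omega
        rw [h0]
      · exact (ih (by omega) a h).trans (hmono n (by omega)).le
  have key : ∀ i ∈ Finset.Icc 1 I, ∀ j ∈ Finset.Icc 1 I, i < j →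
      Disjoint (birthPairs xb I i) (birthPairs xb I j) := by
    intro i hi j hj hij
    rw [Finset.mem_Icc] at hi hj
    rw [Finset.disjoint_left]
    intro q h1 h2
    simp only [birthPairs, Finset.mem_filter] at h1 h2
    have := mono (j - 1) (by omega) i (by omega)
    linarith [h1.2.2.2, h2.2.2.1]
  have hdisj : Set.PairwiseDisjoint (↑(Finset.Icc 1 I)) (birthPairs xb I) := by
    intro i hi j hj hij
    rcases lt_or_gt_of_ne hij with h | h
    · exact key i hi j hj h
    · exact (key j hj i hi h).symm
  have hC : 0 ≤ C := by
    have h1 : (1 : ℕ) ∈ Finset.Icc 1 I := by simp [hI]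
    exact (hβ 1 h1 1 h1).1.trans (hβ 1 h1 1 h1).2
  have hNT : 0 ≤ NT0 := (Finset.sum_nonneg hN).trans hNs
  set S := ∑ k ∈ Finset.Icc 1 I, |N k - M k| with hS
  have hS0 : 0 ≤ S := Finset.sum_nonneg fun _ _ => abs_nonneg _
  let g : ℕ × ℕ → ℝ := fun q => C * (N q.1 * |N q.2 - M q.2| + |N q.1 - M q.1| * M q.2)
  have hg : ∀ q ∈ Finset.Icc 1 I ×ˢ Finset.Icc 1 I, 0 ≤ g q := by
    intro q hq
    rw [Finset.mem_product] at hq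
    have h1 := hN _ hq.1
    have h2 := hM _ hq.2
    simp only [g]
    positivity
  have hsub : ∀ i, birthPairs xb I i ⊆ Finset.Icc 1 I ×ˢ Finset.Icc 1 I :=
    fun i => Finset.filter_subset _ _
  have hB : ∀ i ∈ Finset.Icc 1 I, |Bhat xb β I N i - Bhat xb β I M i| ≤
      ∑ q ∈ birthPairs xb I i, g q := by
    intro i _
    unfold Bhat
    rw [← Finset.sum_sub_distrib]
    refine (Finset.abs_sum_le_sum_abs _ _).trans (Finset.sum_le_sum fun q hq => ?_)
    have hq' := Finset.mem_product.1 (hsub i hq)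
    have h1 := hN _ hq'.1
    have h2 := hM _ hq'.2
    obtain ⟨b0, b1⟩ := hβ _ hq'.2 _ hq'.1
    set b := β (pivot xb q.2) (pivot xb q.1)
    have hc : 0 ≤ (if q.1 = q.2 then (1 : ℝ)/2 else 1) * b ∧
        (if q.1 = q.2 then (1 : ℝ)/2 else 1) * b ≤ C := by
      split_ifs <;> constructor <;> linarith
    set c := (if q.1 = q.2 then (1 : ℝ)/2 else 1) * b
    have e : c * N q.1 * N q.2 - c * M q.1 * M q.2 =
        c * (N q.1 * (N q.2 - M q.2) + (N q.1 - M q.1) * M q.2) := by ring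
    rw [e, abs_mul, abs_of_nonneg hc.1]
    simp only [g]
    refine mul_le_mul hc.2 ?_ (abs_nonneg _) hC
    refine (abs_add_le _ _).trans ?_
    rw [abs_mul, abs_mul, abs_of_nonneg h1, abs_of_nonneg h2]
  calc ∑ i ∈ Finset.Icc 1 I, |Bhat xb β I N i - Bhat xb β I M i|
      ≤ ∑ i ∈ Finset.Icc 1 I, ∑ q ∈ birthPairs xb I i, g q := Finset.sum_le_sum hB
    _ = ∑ q ∈ (Finset.Icc 1 I).biUnion (birthPairs xb I), g q :=
        (Finset.sum_biUnion hdisj).symm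
    _ ≤ ∑ q ∈ Finset.Icc 1 I ×ˢ Finset.Icc 1 I, g q :=
        Finset.sum_le_sum_of_subset_of_nonneg
          (Finset.biUnion_subset.2 fun i _ => hsub i) (fun q hq _ => hg q hq)
    _ = C * ((∑ j ∈ Finset.Icc 1 I, N j) * S + S * ∑ j ∈ Finset.Icc 1 I, M j) := by
        simp only [g]
        rw [← Finset.mul_sum, Finset.sum_add_distrib, hS, Finset.sum_mul_sum,
          Finset.sum_mul_sum, Finset.sum_product, Finset.sum_product]
    _ ≤ C * (NT0 * S + S * NT0) := by gcongr
    _ ≤ 3 * NT0 * C * S := by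
        have : 0 ≤ NT0 * C * S := by positivity
        linarith
end

section
/- Let a grid of ]0,R] with I cells be given, let β be symmetric with β(x_j, x_k) ≥ 0 for all pivots, and let N ∈ ℝ^I be componentwise nonnegative. Then Σ_{i=1}^I B̂_i(N) ≤ (1/2) Σ_{j=1}^I Σ_{k=1}^I β(x_j, x_k) N_j N_k ≤ Σ_{i=1}^I D̂_i(N). In particular the total discrete birth rate never exceeds the total discrete death rate, so the total number of particles is nonincreasing in the coagulation process. -/
/-- The total discrete birth rate is at most `(1/2) ∑_j ∑_k β(x_j,x_k) N_j N_k`, which in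
turn is at most the total discrete death rate: the total number of particles is
nonincreasing in the coagulation process. -/
theorem stmt8 (I : ℕ) (hI : 1 ≤ I) (R : ℝ) (hR : 0 < R)
    (xb : ℕ → ℝ) (hxb0 : xb 0 = 0) (hxbI : xb I = R)
    (hmono : ∀ k < I, xb k < xb (k + 1))
    (β : ℝ → ℝ → ℝ)
    (hβsym : ∀ x y, β x y = β y x)
    (hβpos : ∀ j ∈ Finset.Icc 1 I, ∀ k ∈ Finset.Icc 1 I, 0 ≤ β (pivot xb j) (pivot xb k))
    (N : ℕ → ℝ) (hN : ∀ j ∈ Finset.Icc 1 I, 0 ≤ N j) :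
    ∑ i ∈ Finset.Icc 1 I, Bhat xb β I N i ≤
      (1/2) * ∑ j ∈ Finset.Icc 1 I, ∑ k ∈ Finset.Icc 1 I,
        β (pivot xb j) (pivot xb k) * N j * N k ∧
    (1/2) * ∑ j ∈ Finset.Icc 1 I, ∑ k ∈ Finset.Icc 1 I,
        β (pivot xb j) (pivot xb k) * N j * N k ≤
      ∑ i ∈ Finset.Icc 1 I, Dhat xb β I N i := by
  have hle : ∀ m n, m ≤ n → n ≤ I → xb m ≤ xb n := by
    intro m n hmn
    induction n, hmn using Nat.le_induction with
    | base => intro _; exact le_rfl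
    | succ n _ ih =>
      intro h
      exact (ih (by omega)).trans (hmono n (by omega)).le
  set g : ℕ → ℕ → ℝ := fun j k => β (pivot xb j) (pivot xb k) * N j * N k with hg
  have hgsym : ∀ j k, g j k = g k j := by
    intro j k
    simp only [hg]
    rw [hβsym]
    ring
  have hg0 : ∀ j ∈ Finset.Icc 1 I, ∀ k ∈ Finset.Icc 1 I, 0 ≤ g j k := fun j hj k hk =>
    mul_nonneg (mul_nonneg (hβpos j hj k hk) (hN j hj)) (hN k hk)
  set f : ℕ → ℕ → ℝ := fun j k =>
    if k ≤ j then (if j = k then (1 : ℝ)/2 else 1) * g j k else 0 with hf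
  have hf0 : ∀ j ∈ Finset.Icc 1 I, ∀ k ∈ Finset.Icc 1 I, 0 ≤ f j k := by
    intro j hj k hk
    have := hg0 j hj k hk
    simp only [hf]
    split_ifs <;> linarith
  have hfs : ∀ j k, f j k + f k j = g j k := by
    intro j k
    have := hgsym j k
    rcases lt_trichotomy j k with h | h | h
    · simp [hf, h.le, h.not_ge, h.ne', this]
    · subst h
      simp [hf]
      ring
    · simp [hf, h.le, h.not_ge, h.ne']
  have hS : ∑ j ∈ Finset.Icc 1 I, ∑ k ∈ Finset.Icc 1 I, g j k
      = 2 * ∑ j ∈ Finset.Icc 1 I, ∑ k ∈ Finset.Icc 1 I, f j k := by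
    have h1 : ∑ j ∈ Finset.Icc 1 I, ∑ k ∈ Finset.Icc 1 I, g j k
        = ∑ j ∈ Finset.Icc 1 I, ∑ k ∈ Finset.Icc 1 I, (f j k + f k j) := by
      simp only [hfs]
    rw [h1]
    simp only [Finset.sum_add_distrib]
    rw [Finset.sum_comm (f := fun j k => f k j)]
    ring
  have hB : ∀ i, Bhat xb β I N i = ∑ q ∈ birthPairs xb I i, f q.1 q.2 := by
    intro i
    unfold Bhat
    refine Finset.sum_congr rfl fun q hq => ?_
    have h : q.2 ≤ q.1 := (Finset.mem_filter.1 hq).2.1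
    simp only [hf, hg, if_pos h]
    rw [hβsym]
    ring
  constructor
  · rw [hS, ← Finset.sum_product']
    simp only [hB]
    rw [← Finset.sum_biUnion]
    · have := Finset.sum_le_sum_of_subset_of_nonneg
        (s := (Finset.Icc 1 I).biUnion (birthPairs xb I))
        (t := Finset.Icc 1 I ×ˢ Finset.Icc 1 I) (f := fun q => f q.1 q.2)
        (Finset.biUnion_subset.2 fun i _ => Finset.filter_subset _ _)
        (fun q hq _ => hf0 _ (Finset.mem_product.1 hq).1 _ (Finset.mem_product.1 hq).2)
      linarith
    · intro a ha b hb hab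
      have ha' := Finset.mem_Icc.1 (Finset.mem_coe.1 ha)
      have hb' := Finset.mem_Icc.1 (Finset.mem_coe.1 hb)
      refine Finset.disjoint_left.2 fun q hqa hqb => ?_
      have h1 := (Finset.mem_filter.1 hqa).2.2
      have h2 := (Finset.mem_filter.1 hqb).2.2
      rcases lt_or_gt_of_ne hab with h | h
      · have := hle a (b - 1) (by omega) (by omega)
        linarith [h1.2, h2.1]
      · have := hle b (a - 1) (by omega) (by omega)
        linarith [h2.2, h1.1]
  · have hD : ∑ i ∈ Finset.Icc 1 I, Dhat xb β I N i
        = ∑ j ∈ Finset.Icc 1 I, ∑ k ∈ Finset.Icc 1 I, g j k := by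
      refine Finset.sum_congr rfl fun i _ => ?_
      unfold Dhat
      rw [Finset.mul_sum]
      refine Finset.sum_congr rfl fun j _ => ?_
      simp only [hg]
      ring
    have h0 : 0 ≤ ∑ j ∈ Finset.Icc 1 I, ∑ k ∈ Finset.Icc 1 I, g j k :=
      Finset.sum_nonneg fun j hj => Finset.sum_nonneg fun k hk => hg0 j hj k hk
    rw [hD]
    linarith
end

section
/- Let a < b be real numbers, m = (a+b)/2, and let f : [a,b] → ℝ be twice continuously differentiable. Then | ∫_a^b (x − m) f(x) dx − f'(m) (b − a)³ / 12 | ≤ (sup_{x∈[a,b]} |f''(x)|) (b − a)⁴ / 64. -/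
open Set intervalIntegral

lemma min_aux (a b m : ℝ) (hm : m ∈ Icc a b) (p p' : ℝ → ℝ)
    (hp : ∀ x ∈ Icc a b, HasDerivWithinAt p (p' x) (Icc a b) x)
    (h1 : ∀ x ∈ Icc a b, m ≤ x → 0 ≤ p' x) (h2 : ∀ x ∈ Icc a b, x ≤ m → p' x ≤ 0)
    (x : ℝ) (hx : x ∈ Icc a b) : p m ≤ p x := by
  have hc : ContinuousOn p (Icc a b) := fun x hx => (hp x hx).continuousWithinAt
  rcases le_total m x with h | h
  · have hs : Icc m b ⊆ Icc a b := Icc_subset_Icc_left hm.1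
    refine monotoneOn_of_hasDerivWithinAt_nonneg (f' := p') (convex_Icc m b) (hc.mono hs)
      (fun y hy => (hp y (hs (interior_subset hy))).mono (interior_subset.trans hs))
      (fun y hy => h1 y (hs (interior_subset hy)) (interior_subset hy).1)
      ⟨le_rfl, hm.2⟩ ⟨h, hx.2⟩ h
  · have hs : Icc a m ⊆ Icc a b := Icc_subset_Icc_right hm.2
    refine antitoneOn_of_hasDerivWithinAt_nonpos (f' := p') (convex_Icc a m) (hc.mono hs)
      (fun y hy => (hp y (hs (interior_subset hy))).mono (interior_subset.trans hs))
      (fun y hy => h2 y (hs (interior_subset hy)) (interior_subset hy).2)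
      ⟨hx.1, h⟩ ⟨hm.1, le_rfl⟩ h

/-- First-moment midpoint quadrature estimate: for `f ∈ C²([a,b])` and `m = (a+b)/2`,
`| ∫_a^b (x − m) f(x) dx − f'(m) (b − a)³/12 | ≤ (sup |f''|) (b − a)⁴/64`. -/
theorem stmt10 (a b : ℝ) (hab : a < b) (f f' f'' : ℝ → ℝ) (M : ℝ)
    (hf : ∀ x ∈ Icc a b, HasDerivWithinAt f (f' x) (Icc a b) x)
    (hf' : ∀ x ∈ Icc a b, HasDerivWithinAt f' (f'' x) (Icc a b) x)
    (hf'' : ContinuousOn f'' (Icc a b))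
    (hM : ∀ x ∈ Icc a b, |f'' x| ≤ M) :
    |(∫ x in a..b, (x - (a + b) / 2) * f x) - f' ((a + b) / 2) * (b - a) ^ 3 / 12| ≤
      M * (b - a) ^ 4 / 64 := by
  obtain ⟨m, hmdef⟩ : ∃ m, m = (a + b) / 2 := ⟨_, rfl⟩
  rw [← hmdef]
  have ham : a ≤ m := by linarith
  have hmb : m ≤ b := by linarith
  have hm : m ∈ Icc a b := ⟨ham, hmb⟩
  have hd : ∀ x ∈ Icc a b, |f' x - f' m| ≤ M * |x - m| := fun x hx =>
    (convex_Icc a b).norm_image_sub_le_of_norm_hasDerivWithin_le hf' hM hm hx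
  have key : ∀ s : ℝ, |s| = 1 → ∀ x ∈ Icc a b,
      0 ≤ M / 2 * (x - m) ^ 2 + s * (f x - f m - f' m * (x - m)) := by
    intro s hs x hx
    have hb : ∀ y ∈ Icc a b, |s * (f' y - f' m)| ≤ M * |y - m| := by
      intro y hy
      rw [abs_mul, hs, one_mul]
      exact hd y hy
    have := min_aux a b m hm (fun x => M / 2 * (x - m) ^ 2 + s * (f x - f m - f' m * (x - m)))
      (fun x => M * (x - m) + s * (f' x - f' m)) ?_ ?_ ?_ x hx
    · simpa using this
    · intro y hy
      have e := (hasDerivWithinAt_id y (Icc a b)).sub_const m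
      refine HasDerivWithinAt.congr_deriv (((e.pow 2).const_mul (M / 2)).add
        ((((hf y hy).sub_const (f m)).sub (e.const_mul (f' m))).const_mul s)) ?_
      simp
      ring
    · intro y hy h
      have := (abs_le.1 (hb y hy)).1
      rw [abs_of_nonneg (sub_nonneg.2 h)] at this
      linarith
    · intro y hy h
      have := (abs_le.1 (hb y hy)).2
      rw [abs_of_nonpos (sub_nonpos.2 h)] at this
      linarith
  have hg : ∀ x ∈ Icc a b, |f x - f m - f' m * (x - m)| ≤ M / 2 * (x - m) ^ 2 := by
    intro x hx
    have h1 := key 1 (by simp) x hx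
    have h2 := key (-1) (by simp) x hx
    rw [abs_le]
    constructor <;> linarith
  have hfc : ContinuousOn f (Icc a b) := fun x hx => (hf x hx).continuousWithinAt
  have hGc : ContinuousOn (fun x => (x - m) * (f x - f m - f' m * (x - m))) (Icc a b) := by
    fun_prop
  have hGi := hGc.intervalIntegrable_of_Icc hab.le (μ := MeasureTheory.volume)
  have hsplit : (∫ x in a..b, (x - m) * f x) =
      (∫ x in a..b, (x - m) * (f x - f m - f' m * (x - m))) + f' m * (b - a) ^ 3 / 12 := by
    have e : ∀ x, (x - m) * f x = (x - m) * (f x - f m - f' m * (x - m)) +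
        (fun y => f m * y + f' m * y ^ 2) (x - m) := by intro x; ring
    rw [integral_congr (fun x _ => e x), integral_add hGi
      (Continuous.intervalIntegrable (by fun_prop) _ _), integral_comp_sub_right (fun y => f m * y + f' m * y ^ 2),
      integral_add (Continuous.intervalIntegrable (by fun_prop) _ _)
      (Continuous.intervalIntegrable (by fun_prop) _ _), integral_const_mul, integral_const_mul,
      integral_id, integral_pow]
    rw [hmdef]
    push_cast
    ring
  rw [hsplit, add_sub_cancel_right]
  have hs1 : Icc a m ⊆ Icc a b := Icc_subset_Icc_right hmb
  have hs2 : Icc m b ⊆ Icc a b := Icc_subset_Icc_left ham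
  rw [← integral_add_adjacent_intervals
    ((hGc.mono hs1).intervalIntegrable_of_Icc ham (μ := MeasureTheory.volume))
    ((hGc.mono hs2).intervalIntegrable_of_Icc hmb)]
  have b1 : |∫ x in a..m, (x - m) * (f x - f m - f' m * (x - m))| ≤ M * (b - a) ^ 4 / 128 := by
    have := norm_integral_le_of_norm_le (μ := MeasureTheory.volume) ham
      (f := fun x => (x - m) * (f x - f m - f' m * (x - m)))
      (g := fun x => (fun y => -(M / 2) * y ^ 3) (x - m))
      (Filter.Eventually.of_forall fun x hx => by
        have h := hg x (hs1 ⟨hx.1.le, hx.2⟩)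
        have hx2 : x - m ≤ 0 := sub_nonpos.2 hx.2
        rw [Real.norm_eq_abs, abs_mul, abs_of_nonpos hx2]
        have := mul_le_mul_of_nonneg_left h (neg_nonneg.2 hx2)
        simp only
        linarith) (Continuous.intervalIntegrable (by fun_prop) _ _)
    rw [integral_comp_sub_right (fun y => -(M / 2) * y ^ 3), integral_const_mul, integral_pow] at this
    refine this.trans (le_of_eq ?_)
    rw [hmdef]
    push_cast
    ring
  have b2 : |∫ x in m..b, (x - m) * (f x - f m - f' m * (x - m))| ≤ M * (b - a) ^ 4 / 128 := by
    have := norm_integral_le_of_norm_le (μ := MeasureTheory.volume) hmb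
      (f := fun x => (x - m) * (f x - f m - f' m * (x - m)))
      (g := fun x => (fun y => (M / 2) * y ^ 3) (x - m))
      (Filter.Eventually.of_forall fun x hx => by
        have h := hg x (hs2 ⟨hx.1.le, hx.2⟩)
        have hx2 : 0 ≤ x - m := sub_nonneg.2 hx.1.le
        rw [Real.norm_eq_abs, abs_mul, abs_of_nonneg hx2]
        have := mul_le_mul_of_nonneg_left h hx2
        simp only
        linarith) (Continuous.intervalIntegrable (by fun_prop) _ _)
    rw [integral_comp_sub_right (fun y => (M / 2) * y ^ 3), integral_const_mul, integral_pow] at this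
    refine this.trans (le_of_eq ?_)
    rw [hmdef]
    push_cast
    ring
  refine (abs_add_le _ _).trans ?_
  linarith
end
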